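/- Let V be a finite set, 1 ≤ s, 3s ≤ r, and E_r a finite set of subsets of V each of cardinality exactly r, such that any two disjoint s-element subsets of V are contained in at most one common hyperedge, and V_G nonempty. Then the third spectral moment m_3 = (1/|V_G|) Σ_{x ∈ V_G} (P³)_{xx} of the transformed graph G^(s) is bounded below by the contribution of triangles lying inside a single hyperedge: m_3 ≥ (1/(|V_G| · C(r−s,s)³ · (s!)³)) · Σ_{e ∈ E_r} Σ_{(x,y,z)} 1/(D_[x] · D_[y] · D_[z]), where the inner sum runs over ordered triples (x,y,z) of injective s-tuples whose underlying sets are pairwise disjoint and all contained in e. -/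

import Mathlib

/-!
Every hyperedge `e ⊇ [x]` contributes to `d_x` exactly the injective `s`-tuples with values in the
`(r - s)`-element set `e \ [x]`, so `d_x = D_[x] · k` with `k = C(r - s, s) · s!`
(`deg_eq_Dset_mul`). Expanding the trace,
`∑ₓ (P³)ₓₓ = ∑_{x,y,z} w(x,y) w(y,z) w(z,x) / (k³ D_[x] D_[y] D_[z])`, where the sum may be taken
over all triples of tuples because `w(x,y) = 0` for `x ∉ V_G`. For a fixed pairwise disjoint triple,
the hyperedges containing all three sets are among those counted by each of the three weights;
if there is at least one, each weight is at least `1`, so their number is at most the product of the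
weights (`card_triangle_le`). Comparing triple by triple gives the bound.
-/

open Finset

/-- The underlying vertex set `[x]` of an injective `s`-tuple `x : Fin s ↪ V`. -/
def tset {V : Type*} {s : ℕ} (x : Fin s ↪ V) : Finset V := Finset.univ.map x

/-- `D_A`: the number of hyperedges of `E_r` containing the set `A`. -/
def Dset {V : Type*} [DecidableEq V] (Er : Finset (Finset V)) (A : Finset V) : ℕ :=
  (Er.filter fun e => A ⊆ e).card

/-- The edge weight `w(x,y)` of the transformed graph `G^(s)`: the number of hyperedges
containing `[x] ∪ [y]` when `[x]` and `[y]` are disjoint, and `0` otherwise. -/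
def wgt {V : Type*} [DecidableEq V] {s : ℕ} (Er : Finset (Finset V))
    (x y : Fin s ↪ V) : ℕ :=
  if Disjoint (tset x) (tset y) then (Er.filter fun e => tset x ∪ tset y ⊆ e).card else 0

/-- The degree `d_x = ∑_y w(x,y)` of `x` in the transformed graph `G^(s)`. -/
noncomputable def deg {V : Type*} [Fintype V] [DecidableEq V] {s : ℕ}
    (Er : Finset (Finset V)) (x : Fin s ↪ V) : ℕ :=
  ∑ y : Fin s ↪ V, wgt Er x y

/-- The vertex set `V_G = {x : D_[x] ≥ 1}` of injective `s`-tuples appearing in at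
least one hyperedge. -/
noncomputable def VG (V : Type*) [Fintype V] [DecidableEq V] (Er : Finset (Finset V))
    (s : ℕ) : Finset (Fin s ↪ V) :=
  Finset.univ.filter fun x => 1 ≤ Dset Er (tset x)

lemma tset_card {V : Type*} {s : ℕ} (x : Fin s ↪ V) : (tset x).card = s := by
  simp [tset]

/-- The injective `s`-tuples with values in `A` are the embeddings `Fin s ↪ A`. -/
lemma card_tuples_subset {V : Type*} [Fintype V] [DecidableEq V] (s : ℕ) (A : Finset V) :
    (Finset.univ.filter fun y : Fin s ↪ V => tset y ⊆ A).card = A.card.descFactorial s := by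
  have h : Fintype.card (Fin s ↪ A) = A.card.descFactorial s := by
    simp [Fintype.card_embedding_eq]
  rw [← h, ← Finset.card_univ]
  symm
  refine Finset.card_bij (fun f _ => f.trans (Function.Embedding.subtype (· ∈ A))) ?_ ?_ ?_
  · intro f _
    simp only [Finset.mem_filter, Finset.mem_univ, true_and]
    intro v hv
    simp only [tset, Finset.mem_map, Finset.mem_univ, true_and] at hv
    obtain ⟨i, rfl⟩ := hv
    exact (f i).2
  · intro f _ g _ hfg
    ext i
    exact DFunLike.congr_fun hfg i
  · intro y hy
    simp only [Finset.mem_filter, Finset.mem_univ, true_and] at hy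
    have hmem : ∀ i, y i ∈ A := fun i => hy (by simp [tset])
    refine ⟨⟨fun i => ⟨y i, hmem i⟩, fun i j hij => y.injective (congrArg Subtype.val hij)⟩,
      Finset.mem_univ _, ?_⟩
    ext i
    rfl

lemma deg_eq_Dset_mul {V : Type*} [Fintype V] [DecidableEq V] {r s : ℕ}
    (Er : Finset (Finset V)) (hcard : ∀ e ∈ Er, e.card = r) (x : Fin s ↪ V) :
    deg Er x = Dset Er (tset x) * ((r - s).choose s * s.factorial) := by
  have hw : ∀ y : Fin s ↪ V, wgt Er x y =
      ∑ e ∈ Er.filter (fun e => tset x ⊆ e), if tset y ⊆ e \ tset x then 1 else 0 := by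
    intro y
    rw [← Finset.card_filter, Finset.filter_filter]
    unfold wgt
    split_ifs with h
    · congr 1
      ext e
      simp only [Finset.mem_filter, Finset.union_subset_iff, Finset.subset_sdiff]
      have := h.symm
      tauto
    · symm
      rw [Finset.card_eq_zero, Finset.filter_eq_empty_iff]
      intro e _ he
      exact h (Finset.subset_sdiff.1 he.2).2.symm
  unfold deg
  simp only [hw]
  rw [Finset.sum_comm]
  unfold Dset
  rw [← smul_eq_mul, ← Finset.sum_const]
  refine Finset.sum_congr rfl fun e he => ?_
  rw [Finset.mem_filter] at he
  rw [← Finset.card_filter, card_tuples_subset, Finset.card_sdiff_of_subset he.2, hcard e he.1,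
    tset_card, Nat.descFactorial_eq_factorial_mul_choose, mul_comm]

/-- The number of hyperedges witnessing a triangle `x, y, z` inside a single hyperedge is at most
the product of the three edge weights. -/
lemma card_triangle_le {V : Type*} [DecidableEq V] {s : ℕ}
    (Er : Finset (Finset V)) (x y z : Fin s ↪ V) :
    (Er.filter fun e => tset x ⊆ e ∧ tset y ⊆ e ∧ tset z ⊆ e ∧ Disjoint (tset x) (tset y) ∧
        Disjoint (tset y) (tset z) ∧ Disjoint (tset x) (tset z)).card ≤
      wgt Er x y * wgt Er y z * wgt Er z x := by
  rcases Finset.eq_empty_or_nonempty (Er.filter fun e => tset x ⊆ e ∧ tset y ⊆ e ∧ tset z ⊆ e ∧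
    Disjoint (tset x) (tset y) ∧ Disjoint (tset y) (tset z) ∧ Disjoint (tset x) (tset z))
    with h | ⟨e, he⟩
  · simp [h]
  · rw [Finset.mem_filter] at he
    obtain ⟨heE, hx, hy, hz, hxy, hyz, hxz⟩ := he
    have h1 : 1 ≤ wgt Er y z := by
      rw [wgt, if_pos hyz]
      exact Finset.card_pos.2 ⟨e, Finset.mem_filter.2 ⟨heE, Finset.union_subset hy hz⟩⟩
    have h2 : 1 ≤ wgt Er z x := by
      rw [wgt, if_pos hxz.symm]
      exact Finset.card_pos.2 ⟨e, Finset.mem_filter.2 ⟨heE, Finset.union_subset hz hx⟩⟩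
    refine le_trans ?_ (le_trans (Nat.le_mul_of_pos_right _ h1) (Nat.le_mul_of_pos_right _ h2))
    rw [wgt, if_pos hxy]
    refine Finset.card_le_card fun f hf => ?_
    rw [Finset.mem_filter] at hf ⊢
    exact ⟨hf.1, Finset.union_subset hf.2.1 hf.2.2.1⟩

lemma wgt_eq_zero_of_notMem {V : Type*} [Fintype V] [DecidableEq V] {s : ℕ}
    (Er : Finset (Finset V)) {x : Fin s ↪ V} (hx : x ∉ VG V Er s) (y : Fin s ↪ V) :
    wgt Er x y = 0 := by
  have hD : Dset Er (tset x) = 0 := by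
    by_contra h
    exact hx (by simpa [VG] using Nat.one_le_iff_ne_zero.2 h)
  rw [Dset, Finset.card_eq_zero, Finset.filter_eq_empty_iff] at hD
  unfold wgt
  split_ifs
  · rw [Finset.card_eq_zero, Finset.filter_eq_empty_iff]
    exact fun e he h => hD he (Finset.union_subset_left h)
  · rfl

/-- For `3s ≤ r` and a linear hypergraph (any two disjoint `s`-sets in
at most one common hyperedge), the third spectral moment is bounded below by the
contribution of triangles lying inside a single hyperedge. -/
theorem third_moment_transformed_graph_lower_bound
    (V : Type*) [Fintype V] [DecidableEq V]
    (r s : ℕ) (hs : 1 ≤ s) (hrs : 3 * s ≤ r)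
    (Er : Finset (Finset V)) (hcard : ∀ e ∈ Er, e.card = r)
    (hlin : ∀ A B : Finset V, A.card = s → B.card = s → Disjoint A B →
      (Er.filter fun e => A ∪ B ⊆ e).card ≤ 1)
    (hVG : (VG V Er s).Nonempty)
    (P : Matrix (VG V Er s) (VG V Er s) ℝ)
    (hP : ∀ x y, P x y = (wgt Er x.1 y.1 : ℝ) / (deg Er x.1 : ℝ)) :
    (1 / ((VG V Er s).card : ℝ)) * ∑ x, (P ^ 3) x x ≥
      (1 / (((VG V Er s).card : ℝ) * ((r - s).choose s : ℝ) ^ 3 * (s.factorial : ℝ) ^ 3)) *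
        ∑ e ∈ Er, ∑ x : Fin s ↪ V, ∑ y : Fin s ↪ V, ∑ z : Fin s ↪ V,
          if tset x ⊆ e ∧ tset y ⊆ e ∧ tset z ⊆ e ∧ Disjoint (tset x) (tset y) ∧
              Disjoint (tset y) (tset z) ∧ Disjoint (tset x) (tset z) then
            1 / ((Dset Er (tset x) : ℝ) * (Dset Er (tset y) : ℝ) * (Dset Er (tset z) : ℝ))
          else 0 := by
  set N : ℝ := ((VG V Er s).card : ℝ) with hN
  have hNpos : 0 < N := by
    rw [hN]
    exact_mod_cast hVG.card_pos
  have hCpos : (0 : ℝ) < ((r - s).choose s : ℝ) := by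
    exact_mod_cast Nat.choose_pos (by omega)
  have hFpos : (0 : ℝ) < (s.factorial : ℝ) := by exact_mod_cast s.factorial_pos
  set Q : (Fin s ↪ V) → (Fin s ↪ V) → ℝ := fun x y => (wgt Er x y : ℝ) / (deg Er x : ℝ) with hQ
  have hQ0 : ∀ x, x ∉ VG V Er s → ∀ y, Q x y = 0 := by
    intro x hx y
    simp [hQ, wgt_eq_zero_of_notMem Er hx y]
  -- A sum over the subtype `V_G` of a function vanishing off `V_G` is a sum over all tuples.
  have hext : ∀ f : (Fin s ↪ V) → ℝ, (∀ x, x ∉ VG V Er s → f x = 0) →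
      ∑ x : VG V Er s, f x.1 = ∑ x, f x := by
    intro f hf
    rw [Finset.sum_coe_sort (VG V Er s) f]
    exact Finset.sum_subset (Finset.subset_univ _) fun x _ hx => hf x hx
  have htr : ∑ x, (P ^ 3) x x = ∑ x, ∑ y, ∑ z, Q x y * Q y z * Q z x := by
    have h1 : ∀ x : VG V Er s, (P ^ 3) x x = ∑ y, ∑ z, Q x.1 y * Q y z * Q z x.1 := by
      intro x
      have h2 : (P ^ 3) x x = ∑ y : VG V Er s, ∑ z : VG V Er s,
          Q x.1 y.1 * Q y.1 z.1 * Q z.1 x.1 := by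
        rw [pow_succ, pow_two, Matrix.mul_apply]
        simp only [Matrix.mul_apply, Finset.sum_mul, hP, hQ]
        rw [Finset.sum_comm]
      rw [h2, ← hext (fun y => ∑ z, Q x.1 y * Q y z * Q z x.1)]
      · refine Finset.sum_congr rfl fun y _ => ?_
        exact hext (fun z => Q x.1 y.1 * Q y.1 z * Q z x.1) fun z hz => by simp [hQ0 z hz]
      · intro y hy
        simp [hQ0 y hy]
    simp only [h1]
    exact hext (fun x => ∑ y, ∑ z, Q x y * Q y z * Q z x) fun x hx => by simp [hQ0 x hx]
  have hswap : ∀ f : Finset V → (Fin s ↪ V) → (Fin s ↪ V) → (Fin s ↪ V) → ℝ,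
      ∑ e ∈ Er, ∑ x, ∑ y, ∑ z, f e x y z = ∑ x, ∑ y, ∑ z, ∑ e ∈ Er, f e x y z := by
    intro f
    rw [Finset.sum_comm]
    refine Finset.sum_congr rfl fun x _ => ?_
    rw [Finset.sum_comm]
    refine Finset.sum_congr rfl fun y _ => ?_
    rw [Finset.sum_comm]
  have hK : 1 / (N * ((r - s).choose s : ℝ) ^ 3 * (s.factorial : ℝ) ^ 3) =
      1 / N * (1 / (((r - s).choose s : ℝ) * (s.factorial : ℝ)) ^ 3) := by
    rw [mul_pow, one_div_mul_one_div, mul_assoc]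
  rw [ge_iff_le, hK, mul_assoc]
  refine mul_le_mul_of_nonneg_left ?_ (by positivity)
  rw [htr, hswap, Finset.mul_sum]
  refine Finset.sum_le_sum fun x _ => ?_
  rw [Finset.mul_sum]
  refine Finset.sum_le_sum fun y _ => ?_
  rw [Finset.mul_sum]
  refine Finset.sum_le_sum fun z _ => ?_
  rw [← Finset.sum_filter, Finset.sum_const, nsmul_eq_mul]
  have hT : (((Er.filter fun e => tset x ⊆ e ∧ tset y ⊆ e ∧ tset z ⊆ e ∧
      Disjoint (tset x) (tset y) ∧ Disjoint (tset y) (tset z) ∧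
      Disjoint (tset x) (tset z)).card : ℕ) : ℝ) ≤
      (wgt Er x y : ℝ) * wgt Er y z * wgt Er z x := by
    exact_mod_cast card_triangle_le Er x y z
  have hQQ : Q x y * Q y z * Q z x =
      1 / (((r - s).choose s : ℝ) * (s.factorial : ℝ)) ^ 3 *
        (((wgt Er x y : ℝ) * wgt Er y z * wgt Er z x) *
          (1 / ((Dset Er (tset x) : ℝ) * (Dset Er (tset y) : ℝ) * (Dset Er (tset z) : ℝ)))) := by
    simp only [hQ, deg_eq_Dset_mul Er hcard, Nat.cast_mul, div_eq_mul_inv, mul_inv, mul_pow,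
      inv_pow]
    ring
  rw [hQQ]
  gcongr
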